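/- Let K ≥ 1, let v : ℤ → ℝ be a K-periodic real potential and H the discrete Schrödinger operator on ℓ²(ℤ) with potential v. Then H is bijective if and only if there is no nonzero bounded function x : ℤ → ℂ satisfying x(n+1) + x(n−1) + v(n)·x(n) = 0 for all n ∈ ℤ (i.e. H, viewed as acting by the same formula on ℓ^∞(ℤ), is injective). -/

import Mathlib

noncomputable section

/-!
Let `S` be the shift `(S x) n = x (n + 1)` and let `D(E)` be the discriminant of the potential:
the trace of the monodromy matrix over one period of `x (n + 1) + x (n - 1) = (E - v n) x n`.
Since the monodromy matrix has determinant one, Cayley-Hamilton gives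
`x (n + K) + x (n - K) = D(E) x n` for every solution. This is an identity over any commutative
ring with values in any module (`IsSol.add_shift`). Applied over `ℂ[X]`, with `X` acting as the
transpose of `H` and with the sequence of coordinate functionals as the solution, it becomes the
operator identity `D(H) = S ^ K + S ^ (-K)` (`aeval_disc`), so `‖D(H)‖ ≤ 2`.

* If `2 < |D(0)|`, then `D(0) - D(H)` is invertible; it is a multiple of `H` by a polynomial in
  `H`, so `H` is invertible (`bijective_of_disc`).
* If `|D(0)| ≤ 2`, which makes sense because `D(0)` is real, then the roots `l`, `m` of
  `X ^ 2 - D(0) X + 1` have modulus one. For a solution `x`, the solution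
  `z n = x (n + K) - m x n` satisfies `z (n + K) = l z n`, hence is bounded; and if it vanishes
  then `x (n + K) = m x n` and `x` is itself bounded (`exists_bounded`).

So absence of bounded solutions makes `H` bijective. Conversely, if `H` is bijective then it is
bounded below. For a bounded solution `x`, applying `H` to the truncation of `x` to `[-N, N]` leaves
only the at most four terms at the two ends, so the truncations are bounded in `ℓ²` uniformly in
`N`; thus `x ∈ ℓ²`, and `x = 0` by injectivity (`eq_zero_of_bijective`).
-/

/-! ### Three-term recurrences over a commutative ring -/

/-- The sequence on `ℕ` with initial values `a`, `b` at `0`, `1` that satisfies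
`x (n + 1) + x (n - 1) = w n * x n` for `n ≥ 1`. -/
def fwd {R : Type*} [CommRing R] (w : ℤ → R) (a b : R) : ℕ → R
  | 0 => a
  | 1 => b
  | k + 2 => w ((k : ℤ) + 1) * fwd w a b (k + 1) - fwd w a b k

/-- `u` is a two-sided solution of `u (n + 1) + u (n - 1) = w n • u n`, with values in a module.
The equation `H u = 0` is the case `w = -v`. -/
def IsSol {R M : Type*} [CommRing R] [AddCommGroup M] [Module R M] (w : ℤ → R) (u : ℤ → M) :
    Prop :=
  ∀ n : ℤ, u (n + 1) + u (n - 1) = w n • u n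

theorem map_fwd {R S : Type*} [CommRing R] [CommRing S] (φ : R →+* S) (w : ℤ → R) (a b : R)
    (k : ℕ) : φ (fwd w a b k) = fwd (fun n => φ (w n)) (φ a) (φ b) k := by
  induction k using Nat.twoStepInduction with
  | zero => rfl
  | one => rfl
  | more k h0 h1 => simp only [fwd, map_sub, map_mul, h0, h1]

/-- Conservation of the Wronskian: the transfer matrices have determinant one. -/
theorem fwd_wronskian {R : Type*} [CommRing R] (w : ℤ → R) (k : ℕ) :
    fwd w 1 0 k * fwd w 0 1 (k + 1) - fwd w 1 0 (k + 1) * fwd w 0 1 k = 1 := by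
  induction k with
  | zero => simp [fwd]
  | succ k ih => simp only [fwd]; linear_combination ih

section
variable {R M : Type*} [CommRing R] [AddCommGroup M] [Module R M] {w : ℤ → R} {u u' : ℤ → M}

theorem IsSol.eq_zero (hu : IsSol w u) (h0 : u 0 = 0) (h1 : u 1 = 0) (n : ℤ) : u n = 0 := by
  have key : ∀ n : ℤ, u n = 0 ∧ u (n + 1) = 0 := by
    intro n
    induction n using Int.induction_on with
    | zero => exact ⟨h0, by simpa using h1⟩
    | succ i ih =>
      refine ⟨ih.2, ?_⟩
      have := hu (i + 1)
      simpa [ih.1, ih.2] using this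
    | pred i ih =>
      have := hu (-i)
      simp only [ih.1, ih.2, zero_add, smul_zero] at this
      exact ⟨this, by simpa using ih.1⟩
  exact (key n).1

theorem IsSol.sub (hu : IsSol w u) (hu' : IsSol w u') : IsSol w (fun n => u n - u' n) := by
  intro n
  have h1 := hu n
  have h2 := hu' n
  simp only [smul_sub, ← h1, ← h2]
  abel

theorem IsSol.add (hu : IsSol w u) (hu' : IsSol w u') : IsSol w (fun n => u n + u' n) := by
  intro n
  have h1 := hu n
  have h2 := hu' n
  simp only [smul_add, ← h1, ← h2]
  abel

theorem IsSol.smul (hu : IsSol w u) (r : R) : IsSol w (fun n => r • u n) := by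
  intro n
  simp only [smul_comm (w n) r, ← hu n, smul_add]

theorem IsSol.shift (hu : IsSol w u) {m : ℤ} (hw : ∀ n, w (n + m) = w n) :
    IsSol w (fun n => u (n + m)) := by
  intro n
  have := hu (n + m)
  rw [hw] at this
  simp only [← this, add_right_comm, sub_add_eq_add_sub]

theorem IsSol.eq_fwd (hu : IsSol w u) (k : ℕ) :
    u k = fwd w 1 0 k • u 0 + fwd w 0 1 k • u 1 := by
  induction k using Nat.twoStepInduction with
  | zero => simp [fwd]
  | one => simp [fwd]
  | more k h0 h1 =>
    have h := hu (k + 1)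
    rw [add_sub_cancel_right, ← eq_sub_iff_add_eq] at h
    push_cast at h1 ⊢
    rw [show (k : ℤ) + 2 = k + 1 + 1 by ring, h, h0, h1]
    simp only [fwd]
    module

/-- The discriminant: the trace of the monodromy matrix over `K` steps, which maps
`(u 0, u 1)` to `(u K, u (K + 1))`. -/
def disc (w : ℤ → R) (K : ℕ) : R := fwd w 1 0 K + fwd w 0 1 (K + 1)

/-- Cayley-Hamilton for the monodromy matrix `M`, in the form `M + M⁻¹ = tr M`. Both sides are
solutions in `n` by periodicity, so it is enough to compare them at `n = 0` and `n = 1`. -/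
theorem IsSol.add_shift (hu : IsSol w u) (K : ℕ) (hw : ∀ n, w (n + K) = w n) (n : ℤ) :
    u (n + K) + u (n - K) = disc w K • u n := by
  have hw' : ∀ n, w (n + -(K : ℤ)) = w n := fun n => by simpa using (hw (n + -(K : ℤ))).symm
  have hs := hu.shift hw'
  have hz := ((hu.shift hw).add hs).sub (hu.smul (disc w K))
  have a0 := hu.eq_fwd K
  have a1 := hu.eq_fwd (K + 1)
  have b0 := hs.eq_fwd K
  have b1 := hs.eq_fwd (K + 1)
  have W := fwd_wronskian w K
  push_cast at a1 b1
  simp only [add_neg_cancel, zero_add, add_neg_cancel_comm] at b0 b1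
  -- Inverting the monodromy matrix, whose determinant is one.
  have c0 : u (-(K : ℤ)) = fwd w 0 1 (K + 1) • u 0 - fwd w 0 1 K • u 1 := by
    have := congrArg (· • u (-(K : ℤ))) W
    simp only [one_smul] at this
    rw [b0, b1]
    exact this.symm.trans (by module)
  have c1 : u (1 + -(K : ℤ)) = fwd w 1 0 K • u 1 - fwd w 1 0 (K + 1) • u 0 := by
    have := congrArg (· • u (1 + -(K : ℤ))) W
    simp only [one_smul] at this
    rw [b0, b1]
    exact this.symm.trans (by module)
  have := hz.eq_zero (by simp only [zero_add, a0, c0, disc]; module)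
    (by simp only [add_comm (1 : ℤ) (K : ℤ), a1, c1, disc]; module) n
  simpa [sub_eq_add_neg, ← sub_eq_add_neg, sub_eq_zero] using this

/-- A two-sided solution, glued from `fwd` for `w` and `fwd` for the reflected coefficients. -/
theorem exists_isSol (w : ℤ → R) : ∃ u : ℤ → R, IsSol w u ∧ u 0 = 1 := by
  refine ⟨fun n => if 0 ≤ n then fwd w 1 0 n.toNat else fwd (fun n => w (-n)) 1 (w 0) (-n).toNat,
    ?_, by simp [fwd]⟩
  intro n
  obtain ⟨k, rfl | rfl⟩ := n.eq_nat_or_neg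
  · rcases k with _ | k
    · simp [fwd]
    · have e1 : ((k + 1 : ℕ) + 1 : ℤ).toNat = k + 2 := by omega
      have e2 : ((k + 1 : ℕ) - 1 : ℤ).toNat = k := by omega
      have e3 : ((k + 1 : ℕ) : ℤ).toNat = k + 1 := by omega
      simp only [e1, e2, e3]
      rw [if_pos (by omega), if_pos (by omega), if_pos (by omega)]
      simp [fwd]
  · rcases k with _ | k
    · simp [fwd]
    · have e1 : (-(-((k + 1 : ℕ) : ℤ) + 1)).toNat = k := by omega
      have e2 : (-(-((k + 1 : ℕ) : ℤ) - 1)).toNat = k + 2 := by omega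
      have e3 : (-(-((k + 1 : ℕ) : ℤ))).toNat = k + 1 := by omega
      simp only [e1, e2, e3]
      rw [if_neg (c := 0 ≤ -((k + 1 : ℕ) : ℤ) - 1) (by omega),
        if_neg (c := 0 ≤ -((k + 1 : ℕ) : ℤ)) (by omega)]
      rcases k with _ | k
      · simp [fwd]
      · rw [if_neg (by omega)]
        simp [fwd]
end

/-! ### Bounded solutions when the discriminant lies in `[-2, 2]` -/

theorem bounded_of_shift (K : ℕ) (hK : 1 ≤ K) (z : ℤ → ℂ) (μ : ℂ) (hμ : ‖μ‖ = 1)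
    (hz : ∀ n, z (n + K) = μ * z n) : ∃ C : ℝ, ∀ n, ‖z n‖ ≤ C := by
  have hp : Function.Periodic (fun n => ‖z n‖) (K : ℤ) := fun n => by simp [hz, hμ]
  refine ⟨∑ i ∈ Finset.range K, ‖z i‖, fun n => ?_⟩
  have h1 : ‖z n‖ = ‖z (n % K)‖ := by
    have := hp.int_mul (n / K) (n % K)
    rw [← this]
    congr 2
    have := Int.emod_add_mul_ediv n K
    push_cast
    linarith
  have h2 := Int.emod_nonneg n (b := K) (by omega)
  have h3 := Int.emod_lt_of_pos n (b := K) (by omega)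
  obtain ⟨i, hi⟩ := Int.eq_ofNat_of_zero_le h2
  rw [h1, hi]
  exact Finset.single_le_sum (f := fun i : ℕ => ‖z i‖) (fun _ _ => norm_nonneg _)
    (Finset.mem_range.2 (by omega))

theorem exists_bounded (K : ℕ) (hK : 1 ≤ K) (v : ℤ → ℝ) (hv : ∀ n, v (n + K) = v n)
    (hd : |disc v K| ≤ 2) :
    ∃ x : ℤ → ℂ, x ≠ 0 ∧ (∃ C : ℝ, ∀ n, ‖x n‖ ≤ C) ∧ IsSol (fun n => (v n : ℂ)) x := by
  set d := disc v K with hdd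
  have hdc : disc (fun n => (v n : ℂ)) K = (d : ℂ) := by
    have h1 := map_fwd Complex.ofRealHom v 1 0 K
    have h2 := map_fwd Complex.ofRealHom v 0 1 (K + 1)
    simp only [Complex.ofRealHom_eq_coe, Complex.ofReal_one, Complex.ofReal_zero] at h1 h2
    simp [hdd, disc, h1, h2]
  have hv' : ∀ n, (v (n + K) : ℂ) = v n := fun n => by rw [hv]
  obtain ⟨x, hx, hx0⟩ := exists_isSol (fun n => (v n : ℂ))
  have hd2 : d ^ 2 ≤ 4 := by
    have := abs_le.1 hd
    nlinarith
  have hs : Real.sqrt (4 - d ^ 2) ^ 2 = 4 - d ^ 2 := Real.sq_sqrt (by linarith)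
  set l : ℂ := ⟨d / 2, Real.sqrt (4 - d ^ 2) / 2⟩ with hl
  set m : ℂ := ⟨d / 2, -(Real.sqrt (4 - d ^ 2) / 2)⟩ with hm
  have hl1 : ‖l‖ = 1 := by
    rw [← sq_eq_sq₀ (norm_nonneg _) zero_le_one, Complex.sq_norm, Complex.normSq_apply]
    simp only [hl]; nlinarith
  have hm1 : ‖m‖ = 1 := by
    rw [← sq_eq_sq₀ (norm_nonneg _) zero_le_one, Complex.sq_norm, Complex.normSq_apply]
    simp only [hm]; nlinarith
  have hsum : l + m = d := by
    apply Complex.ext <;> simp [hl, hm]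
  have hprod : l * m = 1 := by
    apply Complex.ext <;> simp [hl, hm] <;> nlinarith
  by_cases hz : ∀ n, x (n + K) = m * x n
  · exact ⟨x, fun h => by simp [h] at hx0, bounded_of_shift K hK x m hm1 hz, hx⟩
  · refine ⟨fun n => x (n + K) - m • x n, fun h => hz fun n => ?_, ?_,
      (hx.shift hv').sub (hx.smul m)⟩
    · simpa [sub_eq_zero] using congrFun h n
    · refine bounded_of_shift K hK _ l hl1 fun n => ?_
      have := hx.add_shift K hv' (n + K)
      rw [hdc, add_sub_cancel_right, ← hsum] at this
      simp only [smul_eq_mul] at this ⊢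
      linear_combination this + x n * hprod

/-! ### The operator identity for the discriminant -/

local notation "ℓ²" => lp (fun _ : ℤ => ℂ) 2

theorem memℓp_two_iff (x : ℤ → ℂ) : Memℓp x 2 ↔ Summable fun n => ‖x n‖ ^ 2 := by
  rw [memℓp_gen_iff (by simp)]
  simp

theorem norm_sq_eq (x : ℓ²) : ‖x‖ ^ 2 = ∑' n, ‖x n‖ ^ 2 := by
  simpa using lp.norm_rpow_eq_tsum (p := 2) (by simp) x

theorem exists_shift (x : ℓ²) (m : ℤ) : ∃ y : ℓ², ‖y‖ = ‖x‖ ∧ ∀ n, y n = x (n + m) := by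
  have hx := (memℓp_two_iff _).1 x.2
  have hy : Memℓp (fun n => x (n + m)) 2 :=
    (memℓp_two_iff _).2 ((Equiv.addRight m).summable_iff.2 hx)
  refine ⟨⟨_, hy⟩, ?_, fun n => rfl⟩
  rw [← sq_eq_sq₀ (norm_nonneg _) (norm_nonneg _), norm_sq_eq, norm_sq_eq]
  exact (Equiv.addRight m).tsum_eq fun n => ‖x n‖ ^ 2

open Polynomial in
/-- The discriminant of the operator itself is `S ^ K + S ^ (-K)`, where `S` is the shift. The
coordinate functionals `δ n` satisfy `X • δ n = δ (n + 1) + δ (n - 1) + v n • δ n` when `X` acts as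
the transpose of `H`, so they form a solution over `ℂ[X]` with coefficients `X - v n`. -/
theorem aeval_disc (K : ℕ) (v : ℤ → ℂ) (hv : ∀ n, v (n + K) = v n) (H : ℓ² →L[ℂ] ℓ²)
    (hH : ∀ x : ℓ², ∀ n : ℤ, H x n = x (n + 1) + x (n - 1) + v n * x n) (x : ℓ²) (n : ℤ) :
    aeval H (disc (fun n => X - C (v n)) K) x n = x (n + K) + x (n - K) := by
  let δ : ℤ → Module.Dual ℂ ℓ² := fun n =>
    { toFun := fun x => x n
      map_add' := fun _ _ => rfl
      map_smul' := fun _ _ => rfl }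
  have hδ (x : ℓ²) (n : ℤ) : δ n x = x n := rfl
  let T : Module.End ℂ (Module.Dual ℂ ℓ²) := (H : ℓ² →ₗ[ℂ] ℓ²).dualMap
  have hT (p : ℂ[X]) : ∀ (f : Module.Dual ℂ ℓ²) (x : ℓ²), aeval T p f x = f (aeval H p x) := by
    induction p using Polynomial.induction_on' with
    | add p q hp hq => intro f x; simp [hp, hq]
    | monomial k a =>
      intro f x
      have : ∀ (k : ℕ) (f : Module.Dual ℂ ℓ²) (x : ℓ²), (T ^ k) f x = f ((H ^ k) x) := by
        intro k
        induction k with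
        | zero => intro f x; simp
        | succ k ih =>
          intro f x
          rw [pow_succ, pow_succ', Module.End.mul_apply, ih]
          rfl
      simp [aeval_monomial, this, Algebra.algebraMap_eq_smul_one]
  have hsol : IsSol (fun n => X - C (v n)) fun n => Module.AEval'.of T (δ n) := by
    intro n
    simp only [sub_smul, Module.AEval'.X_smul_of]
    have : T (δ n) = δ (n + 1) + δ (n - 1) + v n • δ n := by
      ext x
      exact hH x n
    rw [this, Module.AEval.C_smul]
    simp
  have key := hsol.add_shift K (fun n => by rw [hv]) n
  rw [← map_add, ← Module.AEval.of_aeval_smul] at key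
  have key2 := (Module.AEval'.of T).injective key
  have key3 := LinearMap.congr_fun key2 x
  rw [← hδ, ← hT]
  exact key3.symm

open Polynomial in
theorem bijective_of_disc (K : ℕ) (v : ℤ → ℝ) (hv : ∀ n, v (n + K) = v n) (H : ℓ² →L[ℂ] ℓ²)
    (hH : ∀ x : ℓ², ∀ n : ℤ, H x n = x (n + 1) + x (n - 1) + (v n : ℂ) * x n)
    (hd : 2 < |disc (fun n => -v n) K|) : Function.Bijective H := by
  set D : ℂ[X] := disc (fun n => X - C (v n : ℂ)) K with hD
  have hD0 : D.coeff 0 = (disc (fun n => -v n) K : ℝ) := by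
    have a1 := map_fwd (evalRingHom (0 : ℂ)) (fun n => X - C (v n : ℂ)) 1 0 K
    have a2 := map_fwd (evalRingHom (0 : ℂ)) (fun n => X - C (v n : ℂ)) 0 1 (K + 1)
    have h1 := map_fwd Complex.ofRealHom (fun n => -v n) 1 0 K
    have h2 := map_fwd Complex.ofRealHom (fun n => -v n) 0 1 (K + 1)
    simp at h1 h2 a1 a2
    rw [coeff_zero_eq_eval_zero]
    simp [hD, disc, a1, a2, h1, h2]
  have hB : ‖aeval H D‖ ≤ 2 := by
    refine ContinuousLinearMap.opNorm_le_bound _ zero_le_two fun x => ?_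
    obtain ⟨y, hy, hy'⟩ := exists_shift x K
    obtain ⟨z, hz, hz'⟩ := exists_shift x (-K)
    have : aeval H D x = y + z := by
      ext n
      rw [aeval_disc K (fun n => v n) (fun n => by rw [hv]) H hH]
      simp [hy', hz', sub_eq_add_neg]
    rw [this]
    linarith [norm_add_le y z]
  have hone : ‖(1 : ℓ² →L[ℂ] ℓ²)‖ ≤ 1 := ContinuousLinearMap.norm_id_le
  have hmem : D.coeff 0 ∈ resolventSet ℂ (aeval H D) := by
    apply spectrum.mem_resolventSet_of_norm_lt_mul
    rw [hD0, Complex.norm_real, Real.norm_eq_abs]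
    nlinarith [norm_nonneg (aeval H D)]
  -- The constant term `D(0)` is what has to be removed from `D(H)` to make it divisible by `H`.
  have hfac : algebraMap ℂ _ (D.coeff 0) - aeval H D = -(aeval H D.divX) * H := by
    conv_lhs => rw [← divX_mul_X_add D]
    simp
  rw [spectrum.mem_resolventSet_iff, hfac] at hmem
  have hcomm : Commute (-(aeval H D.divX)) H := by
    have : Commute (aeval H D.divX) (aeval H (X : ℂ[X])) := by
      rw [commute_iff_eq, ← map_mul, ← map_mul, mul_comm]
    rw [aeval_X] at this
    exact this.neg_left
  exact ContinuousLinearMap.isUnit_iff_bijective.1 (hcomm.isUnit_mul_iff.1 hmem).2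

/-! ### Bounded solutions of an invertible operator -/

/-- An operator of this form that is bijective on `ℓ²` has no nonzero bounded solution. The
potential `v` is arbitrary: the truncation argument never estimates it. -/
theorem eq_zero_of_bijective (v : ℤ → ℂ) (H : ℓ² →L[ℂ] ℓ²)
    (hH : ∀ x : ℓ², ∀ n : ℤ, H x n = x (n + 1) + x (n - 1) + v n * x n)
    (hbij : Function.Bijective H) (x : ℤ → ℂ) (C : ℝ) (hC : ∀ n, ‖x n‖ ≤ C)
    (hx : ∀ n, x (n + 1) + x (n - 1) + v n * x n = 0) : x = 0 := by
  obtain ⟨c, hc⟩ : ∃ c : ℝ, ∀ y : ℓ², ‖y‖ ≤ c * ‖H y‖ := by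
    let e := ContinuousLinearEquiv.ofBijective H (LinearMap.ker_eq_bot.2 hbij.1)
      (LinearMap.range_eq_top.2 hbij.2)
    refine ⟨‖(e.symm : ℓ² →L[ℂ] ℓ²)‖, fun y => ?_⟩
    simpa [e] using (e.symm : ℓ² →L[ℂ] ℓ²).le_opNorm (H y)
  have hfin : ∀ N : ℕ, ∑ n ∈ Finset.Icc (-(N : ℤ)) N, ‖x n‖ ^ 2 ≤ c ^ 2 * (16 * C ^ 2) := by
    intro N
    let I := Finset.Icc (-(N : ℤ)) N
    let t : ℤ → ℂ := fun n => if n ∈ I then x n else 0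
    have ht : Memℓp t 2 := by
      rw [memℓp_two_iff]
      refine summable_of_ne_finset_zero (s := I) fun n hn => ?_
      simp [t, hn]
    let y : ℓ² := ⟨t, ht⟩
    have hy : ∀ n, y n = t n := fun _ => rfl
    have hny : ‖y‖ ^ 2 = ∑ n ∈ I, ‖x n‖ ^ 2 := by
      rw [norm_sq_eq, tsum_eq_sum (s := I) fun n hn => by simp [hy, t, hn]]
      exact Finset.sum_congr rfl fun n hn => by simp [hy, t, hn]
    -- For `n ∉ J`, the points `n - 1`, `n`, `n + 1` are all inside or all outside `[-N, N]`.
    let J : Finset ℤ := {(N : ℤ), (N : ℤ) + 1, -(N : ℤ), -(N : ℤ) - 1}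
    have hHy0 : ∀ n ∉ J, H y n = 0 := by
      intro n hn
      simp only [J, Finset.mem_insert, Finset.mem_singleton, not_or] at hn
      simp only [hH, hy, t, I, Finset.mem_Icc]
      by_cases h : -(N : ℤ) ≤ n ∧ n ≤ N
      · rw [if_pos (by omega), if_pos (by omega), if_pos h, hx]
      · rw [if_neg (by omega), if_neg (by omega), if_neg h]
        simp
    have hC0 : 0 ≤ C := (norm_nonneg _).trans (hC 0)
    have ht1 : ∀ n, ‖t n‖ ≤ C := fun n => by
      by_cases h : n ∈ I <;> simp [t, h, hC, hC0]
    have ht2 : ∀ n, ‖t n - x n‖ ≤ C := fun n => by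
      by_cases h : n ∈ I <;> simp [t, h, hC, hC0]
    -- Where `n ∈ I`, the equation for `x` trades the term `v n * x n`, over which there is no
    -- control, for the two neighbours.
    have hHy1 : ∀ n, ‖H y n‖ ≤ 2 * C := by
      intro n
      rw [hH, hy, hy, hy]
      by_cases h : n ∈ I
      · have e : t (n + 1) + t (n - 1) + v n * t n
            = (t (n + 1) - x (n + 1)) + (t (n - 1) - x (n - 1)) := by
          simp only [show t n = x n by simp [t, h]]
          linear_combination hx n
        rw [e]
        linarith [norm_add_le (t (n + 1) - x (n + 1)) (t (n - 1) - x (n - 1)), ht2 (n + 1),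
          ht2 (n - 1)]
      · rw [show t n = 0 by simp [t, h], mul_zero, add_zero]
        linarith [norm_add_le (t (n + 1)) (t (n - 1)), ht1 (n + 1), ht1 (n - 1)]
    have hnH : ‖H y‖ ^ 2 ≤ 16 * C ^ 2 := by
      rw [norm_sq_eq, tsum_eq_sum (s := J) fun n hn => by simp [hHy0 n hn]]
      calc ∑ n ∈ J, ‖H y n‖ ^ 2 ≤ J.card • (2 * C) ^ 2 :=
            Finset.sum_le_card_nsmul _ _ _ fun n _ => by gcongr; exact hHy1 n
        _ ≤ 4 • (2 * C) ^ 2 := by gcongr; exact Finset.card_le_four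
        _ = 16 * C ^ 2 := by rw [nsmul_eq_mul]; push_cast; ring
    rw [← hny]
    calc ‖y‖ ^ 2 ≤ (c * ‖H y‖) ^ 2 := by gcongr; exact hc y
      _ = c ^ 2 * ‖H y‖ ^ 2 := by ring
      _ ≤ c ^ 2 * (16 * C ^ 2) := by gcongr
  have hsum : Summable fun n => ‖x n‖ ^ 2 := by
    refine summable_of_sum_le (c := c ^ 2 * (16 * C ^ 2)) (fun _ => by positivity) fun s => ?_
    obtain ⟨N, hN⟩ : ∃ N : ℕ, s ⊆ Finset.Icc (-(N : ℤ)) N := by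
      refine ⟨s.sup Int.natAbs, fun n hn => ?_⟩
      have := Finset.le_sup (f := Int.natAbs) hn
      rw [Finset.mem_Icc]
      omega
    exact (Finset.sum_le_sum_of_subset_of_nonneg hN fun _ _ _ => by positivity).trans (hfin N)
  let X : ℓ² := ⟨x, (memℓp_two_iff x).2 hsum⟩
  have hX : H X = 0 := by
    ext n
    rw [hH]
    exact hx n
  have : X = 0 := hbij.1 (by rw [hX, map_zero])
  exact congrArg Subtype.val this

/-- a `K`-periodic discrete Schrödinger operator is bijective on `ℓ²(ℤ)`
if and only if it has no nontrivial bounded solution of `Hx = 0`, i.e. it is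
injective on `ℓ^∞(ℤ)`. -/
theorem stmt9 (K : ℕ) (hK : 1 ≤ K) (v : ℤ → ℝ)
    (hper : ∀ n : ℤ, v (n + (K : ℤ)) = v n)
    (H : lp (fun _ : ℤ => ℂ) 2 →L[ℂ] lp (fun _ : ℤ => ℂ) 2)
    (hH : ∀ x : lp (fun _ : ℤ => ℂ) 2, ∀ n : ℤ,
      H x n = x (n + 1) + x (n - 1) + (v n : ℂ) * x n) :
    Function.Bijective H ↔
      ¬ ∃ x : ℤ → ℂ, x ≠ 0 ∧ (∃ C : ℝ, ∀ n : ℤ, ‖x n‖ ≤ C) ∧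
        (∀ n : ℤ, x (n + 1) + x (n - 1) + (v n : ℂ) * x n = 0) := by
  constructor
  · rintro hbij ⟨x, hx0, ⟨C, hC⟩, hx⟩
    exact hx0 (eq_zero_of_bijective (fun n => v n) H hH hbij x C hC hx)
  · intro h
    refine bijective_of_disc K v hper H hH (not_le.1 fun hd => h ?_)
    obtain ⟨x, hx0, hb, hx⟩ := exists_bounded K hK (fun n => -v n) (fun n => by rw [hper]) hd
    refine ⟨x, hx0, hb, fun n => ?_⟩
    have := hx n
    simp only [smul_eq_mul, Complex.ofReal_neg] at this
    rw [this]
    ring
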